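/- Let δ > 0, σ = 1, and t ≥ 0. Then lim_{λ→+∞} λ u_λ(t) = 1 − e^{−t/(2δ)}, where u_λ(t) is the solution with constant forcing term 1 and null initial data, defined for all λ large enough that δ²λ² > λ. -/

import Mathlib

open Filter

/-- `x₁(λ) = δλ^σ + (δ²λ^{2σ} − λ)^{1/2}`, minus the smaller root of
`x² + 2δλ^σ x + λ` in the supercritical regime. -/
noncomputable def x1 (δ σ lam : ℝ) : ℝ :=
  δ * lam ^ σ + (δ ^ 2 * lam ^ (2 * σ) - lam) ^ ((1 : ℝ) / 2)

/-- `x₂(λ) = δλ^σ − (δ²λ^{2σ} − λ)^{1/2}`, minus the larger root of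
`x² + 2δλ^σ x + λ` in the supercritical regime. -/
noncomputable def x2 (δ σ lam : ℝ) : ℝ :=
  δ * lam ^ σ - (δ ^ 2 * lam ^ (2 * σ) - lam) ^ ((1 : ℝ) / 2)

/-- The solution of `u'' + 2δλ^σ u' + λu = 1`, `u(0) = u'(0) = 0`. -/
noncomputable def uSol (δ σ lam t : ℝ) : ℝ :=
  1 / lam + (x2 δ σ lam * Real.exp (-(x1 δ σ lam) * t)
    - x1 δ σ lam * Real.exp (-(x2 δ σ lam) * t)) / (lam * (x1 δ σ lam - x2 δ σ lam))

/-- The derivative of the above solution. -/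
noncomputable def uDer (δ σ lam t : ℝ) : ℝ :=
  (Real.exp (-(x2 δ σ lam) * t) - Real.exp (-(x1 δ σ lam) * t))
    / (x1 δ σ lam - x2 δ σ lam)

/-! With constant forcing the solution satisfies
`λ u_λ(t) = 1 + (x₂ e^{-x₁ t} - x₁ e^{-x₂ t}) / (x₁ - x₂)`. Since `x₁ → ∞`, a limit `x₂ → c` is all
that is needed: the fast mode `e^{-x₁ t}` stays bounded while its coefficient vanishes, and the slow
mode `e^{-x₂ t}` survives with coefficient tending to `-1`. For `σ = 1` the limit `c = 1 / (2δ)`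
comes from `x₁ ~ 2δλ^σ` and `x₁ x₂ = λ`. -/

theorem tendsto_mul_exp_sub_mul_exp_div_sub {ι : Type*} {l : Filter ι} {a b : ι → ℝ} {c t : ℝ}
    (ht : 0 ≤ t) (ha : Tendsto a l atTop) (hb : Tendsto b l (nhds c)) :
    Tendsto (fun i => (b i * Real.exp (-(a i) * t) - a i * Real.exp (-(b i) * t)) / (a i - b i)) l
      (nhds (-Real.exp (-c * t))) := by
  have gap_atTop : Tendsto (fun i => a i - b i) l atTop := by
    simpa only [sub_eq_add_neg] using ha.atTop_add hb.neg
  have fast_coeff : Tendsto (fun i => b i / (a i - b i)) l (nhds 0) := hb.div_atTop gap_atTop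
  have fast_bounded : IsBoundedUnder (· ≤ ·) l (norm ∘ fun i => Real.exp (-(a i) * t)) := by
    refine isBoundedUnder_of_eventually_le (a := 1) ?_
    filter_upwards [ha.eventually_ge_atTop 0] with i hi
    rw [Function.comp_apply, Real.norm_eq_abs, Real.abs_exp, Real.exp_le_one_iff, neg_mul,
      neg_nonpos]
    exact mul_nonneg hi ht
  have fast := fast_coeff.zero_mul_isBoundedUnder_le fast_bounded
  have slow_coeff : Tendsto (fun i => a i / (a i - b i)) l (nhds 1) := by
    have h := fast_coeff.const_add 1
    rw [add_zero] at h
    refine h.congr' ?_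
    filter_upwards [gap_atTop.eventually_ne_atTop 0] with i gap_ne
    rw [one_add_div gap_ne, sub_add_cancel]
  have slow : Tendsto (fun i => a i / (a i - b i) * Real.exp (-(b i) * t)) l
      (nhds (Real.exp (-c * t))) := by
    simpa only [one_mul] using slow_coeff.mul (hb.neg.mul_const t).rexp
  have diff := fast.sub slow
  rw [zero_sub] at diff
  exact diff.congr fun i => by ring

theorem lam_mul_uSol (δ σ t : ℝ) {lam : ℝ} (hlam : lam ≠ 0) :
    lam * uSol δ σ lam t = 1 + (x2 δ σ lam * Real.exp (-(x1 δ σ lam) * t)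
      - x1 δ σ lam * Real.exp (-(x2 δ σ lam) * t)) / (x1 δ σ lam - x2 δ σ lam) := by
  rw [uSol, mul_add, mul_one_div_cancel hlam, mul_div_assoc', mul_div_mul_left _ _ hlam]

theorem rpow_two_mul_eq_sq {x : ℝ} (hx : 0 ≤ x) (y : ℝ) : x ^ (2 * y) = (x ^ y) ^ 2 := by
  rw [mul_comm, Real.rpow_mul hx, Real.rpow_two]

theorem x1_mul_x2 {δ σ lam : ℝ} (hlam : 0 ≤ lam) (hdisc : lam ≤ δ ^ 2 * lam ^ (2 * σ)) :
    x1 δ σ lam * x2 δ σ lam = lam := by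
  rw [x1, x2, ← Real.sqrt_eq_rpow, ← sq_sub_sq, Real.sq_sqrt (sub_nonneg.2 hdisc), mul_pow,
    ← rpow_two_mul_eq_sq hlam, sub_sub_cancel]

theorem x1_div_rpow (δ σ : ℝ) {lam : ℝ} (hlam : 0 < lam) :
    x1 δ σ lam / lam ^ σ = δ + √(δ ^ 2 - lam ^ (1 - 2 * σ)) := by
  have sqrt_rpow : √(lam ^ (2 * σ)) = lam ^ σ := by
    rw [rpow_two_mul_eq_sq hlam.le, Real.sqrt_sq (by positivity)]
  have disc_div :
      (δ ^ 2 * lam ^ (2 * σ) - lam) / lam ^ (2 * σ) = δ ^ 2 - lam ^ (1 - 2 * σ) := by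
    rw [sub_div, mul_div_cancel_right₀ _ (by positivity), Real.rpow_sub hlam, Real.rpow_one]
  rw [x1, ← Real.sqrt_eq_rpow, add_div, mul_div_cancel_right₀ _ (by positivity), ← disc_div,
    Real.sqrt_div' _ (by positivity), sqrt_rpow]

theorem tendsto_x1_atTop {δ σ : ℝ} (hδ : 0 < δ) (hσ : 0 < σ) : Tendsto (x1 δ σ) atTop atTop := by
  refine tendsto_atTop_mono (fun lam => ?_) ((tendsto_rpow_atTop hσ).const_mul_atTop hδ)
  rw [x1, ← Real.sqrt_eq_rpow]
  exact le_add_of_nonneg_right (Real.sqrt_nonneg _)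

theorem tendsto_rpow_one_sub_two_mul {σ : ℝ} (hσ : 1 / 2 < σ) :
    Tendsto (fun lam : ℝ => lam ^ (1 - 2 * σ)) atTop (nhds 0) := by
  simpa only [neg_sub] using tendsto_rpow_neg_atTop (show 0 < 2 * σ - 1 by linarith)

theorem eventually_le_sq_mul_rpow {δ σ : ℝ} (hδ : δ ≠ 0) (hσ : 1 / 2 < σ) :
    ∀ᶠ lam : ℝ in atTop, lam ≤ δ ^ 2 * lam ^ (2 * σ) := by
  filter_upwards [eventually_gt_atTop 0,
    (tendsto_rpow_one_sub_two_mul hσ).eventually_le_const (sq_pos_of_ne_zero hδ)] with lam hlam hle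
  rwa [Real.rpow_sub hlam, Real.rpow_one, div_le_iff₀ (by positivity)] at hle

theorem tendsto_x1_div_rpow {δ σ : ℝ} (hδ : 0 ≤ δ) (hσ : 1 / 2 < σ) :
    Tendsto (fun lam => x1 δ σ lam / lam ^ σ) atTop (nhds (2 * δ)) := by
  have h := (((tendsto_rpow_one_sub_two_mul hσ).const_sub (δ ^ 2)).sqrt).const_add δ
  rw [sub_zero, Real.sqrt_sq hδ, ← two_mul] at h
  refine h.congr' ?_
  filter_upwards [eventually_gt_atTop 0] with lam hlam
  exact (x1_div_rpow δ σ hlam).symm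

theorem tendsto_x2_div_rpow {δ σ : ℝ} (hδ : 0 < δ) (hσ : 1 / 2 < σ) :
    Tendsto (fun lam => x2 δ σ lam / lam ^ (1 - σ)) atTop (nhds (2 * δ)⁻¹) := by
  refine ((tendsto_x1_div_rpow hδ.le hσ).inv₀ (by positivity)).congr' ?_
  filter_upwards [eventually_gt_atTop 0, eventually_le_sq_mul_rpow hδ.ne' hσ] with lam hlam hdisc
  have vieta := x1_mul_x2 hlam.le hdisc
  have x1_ne : x1 δ σ lam ≠ 0 := left_ne_zero_of_mul (vieta.trans_ne hlam.ne')
  rw [inv_div, Real.rpow_sub hlam, Real.rpow_one, div_div_eq_mul_div, div_eq_div_iff x1_ne hlam.ne']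
  linear_combination -lam ^ σ * vieta

theorem tendsto_lam_mul_uSol {δ σ c t : ℝ} (hδ : 0 < δ) (hσ : 0 < σ) (ht : 0 ≤ t)
    (hc : Tendsto (x2 δ σ) atTop (nhds c)) :
    Tendsto (fun lam => lam * uSol δ σ lam t) atTop (nhds (1 - Real.exp (-c * t))) := by
  have h := (tendsto_mul_exp_sub_mul_exp_div_sub ht (tendsto_x1_atTop hδ hσ) hc).const_add 1
  rw [← sub_eq_add_neg] at h
  refine h.congr' ?_
  filter_upwards [eventually_ne_atTop 0] with lam hlam
  exact (lam_mul_uSol δ σ t hlam).symm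

/-- for `δ > 0`, `σ = 1` and `t ≥ 0`, `λ u_λ(t) → 1 − e^{−t/(2δ)}`
as `λ → +∞`. -/
theorem lam_mul_uSol_tendsto_sigma_one (δ t : ℝ) (hδ : 0 < δ) (ht : 0 ≤ t) :
    Tendsto (fun lam : ℝ => lam * uSol δ 1 lam t) atTop
      (nhds (1 - Real.exp (-t / (2 * δ)))) := by
  have x2_lim : Tendsto (x2 δ 1) atTop (nhds (2 * δ)⁻¹) := by
    simpa only [sub_self, Real.rpow_zero, div_one] using
      tendsto_x2_div_rpow hδ (show (1 : ℝ) / 2 < 1 by norm_num)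
  have exponent : -(2 * δ)⁻¹ * t = -t / (2 * δ) := by ring
  simpa only [exponent] using tendsto_lam_mul_uSol hδ one_pos ht x2_lim
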